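/- Key surgery estimate: Let ω be a locally finite positive Borel measure on ℝⁿ, let J and R be cubes that are ρ-close (comparable side lengths 2^{−ρ}ℓ(R) ≤ ℓ(J) ≤ 2^{ρ}ℓ(R), in a common grid, touching, with J ⊂ 3R or R ⊂ 3J), let J′ be a dyadic child of J, and let λ ∈ (0,1/2). Then, averaging over the translation parameterization of dyadic grids, 𝔼_Ω ∫_{(J+γ)′ ∖ (J+γ)_λ} |Δ_{J+γ}^ω 1_R|² dω ≤ C √λ ω(R), where C depends only on n and ρ. -/

import Mathlib

open MeasureTheory Set Filter Topology
open scoped ENNReal NNReal Classical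

noncomputable section

/-- Euclidean space `ℝⁿ`. -/
abbrev Pt (n : ℕ) : Type := EuclideanSpace ℝ (Fin n)

/-- An axis-parallel half-open cube in `ℝⁿ`, given by its corner `c` and positive
side length `l`. -/
structure Cube (n : ℕ) : Type where
  c : Pt n
  l : ℝ
  lpos : 0 < l

namespace Cube

variable {n : ℕ}

/-- The underlying (half-open) set of the cube. -/
def set (Q : Cube n) : Set (Pt n) := {x | ∀ i, Q.c i ≤ x i ∧ x i < Q.c i + Q.l}

/-- The center of the cube. -/
def center (Q : Cube n) : Pt n := WithLp.toLp 2 (fun i => Q.c i + Q.l / 2)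

/-- The concentric triple `3Q`. -/
def tri (Q : Cube n) : Cube n := ⟨WithLp.toLp 2 (fun i => Q.c i - Q.l), 3 * Q.l, by have := Q.lpos; linarith⟩

/-- The dyadic child of a cube indexed by `e : Fin n → Bool`. -/
def child (Q : Cube n) (e : Fin n → Bool) : Cube n :=
  ⟨WithLp.toLp 2 (fun i => Q.c i + (if e i then Q.l / 2 else 0)), Q.l / 2, by have := Q.lpos; linarith⟩

/-- The translate `Q + γ` of a cube. -/
def trans (Q : Cube n) (γ : Pt n) : Cube n := ⟨WithLp.toLp 2 (fun i => Q.c i + γ i), Q.l, Q.lpos⟩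

/-- The `λ`-interior `Q_λ = {x ∈ Q : dist(x,∂Q) > λ ℓ(Q)}` of a cube. -/
def inn (Q : Cube n) (lam : ℝ) : Set (Pt n) :=
  {x ∈ Q.set | lam * Q.l < Metric.infDist x (frontier Q.set)}

end Cube

/-- The distance between two sets, as an extended nonnegative real. -/
def sDistE {n : ℕ} (s t : Set (Pt n)) : ℝ≥0∞ := ⨅ (x ∈ s) (y ∈ t), edist x y

/-- Side lengths comparable within a factor `Cc` : `1/Cc ≤ ℓ(Q)/ℓ(Q') ≤ Cc`. -/
def sideComp {n : ℕ} (Cc : ℝ) (Q Q' : Cube n) : Prop := Q.l ≤ Cc * Q'.l ∧ Q'.l ≤ Cc * Q.l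

/-- Two cubes touch if their closures intersect, and the intersection is contained in
the boundary of the larger cube. -/
def Touching {n : ℕ} (Q R : Cube n) : Prop :=
  (closure Q.set ∩ closure R.set).Nonempty ∧
  (Q.l ≤ R.l → closure Q.set ∩ closure R.set ⊆ frontier R.set) ∧
  (R.l ≤ Q.l → closure Q.set ∩ closure R.set ⊆ frontier Q.set)

/-- The indicator function of a set. -/
def indic {n : ℕ} (s : Set (Pt n)) : Pt n → ℝ := s.indicator 1

/-- A standard `α`-fractional Calderón–Zygmund kernel in `ℝⁿ`: size and smoothness of
order `1 + δ`, for the kernel and its adjoint. -/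
structure CZKernel (n : ℕ) (α : ℝ) : Type where
  K : Pt n → Pt n → ℝ
  C₀ : ℝ
  Cpos : 0 < C₀
  δ : ℝ
  δpos : 0 < δ
  size : ∀ x y : Pt n, x ≠ y → |K x y| ≤ C₀ * ‖x - y‖ ^ (α - n)
  gradSize : ∀ x y : Pt n, x ≠ y →
    ‖fderiv ℝ (fun z => K z y) x‖ ≤ C₀ * ‖x - y‖ ^ (α - n - 1)
  gradHolder : ∀ x x' y : Pt n, x ≠ y → ‖x - x'‖ ≤ ‖x - y‖ / 2 →
    ‖fderiv ℝ (fun z => K z y) x - fderiv ℝ (fun z => K z y) x'‖ ≤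
      C₀ * (‖x - x'‖ / ‖x - y‖) ^ δ * ‖x - y‖ ^ (α - n - 1)
  gradSizeAdj : ∀ x y : Pt n, x ≠ y →
    ‖fderiv ℝ (fun z => K x z) y‖ ≤ C₀ * ‖x - y‖ ^ (α - n - 1)
  gradHolderAdj : ∀ x y y' : Pt n, x ≠ y → ‖y - y'‖ ≤ ‖x - y‖ / 2 →
    ‖fderiv ℝ (fun z => K x z) y - fderiv ℝ (fun z => K x z) y'‖ ≤
      C₀ * (‖y - y'‖ / ‖x - y‖) ^ δ * ‖x - y‖ ^ (α - n - 1)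

/-- A (tangent line type) truncation of a CZ kernel: a bounded kernel, vanishing on the
diagonal, compactly supported, agreeing with `K` in the annulus `d ≤ |x-y| ≤ r`. -/
structure Truncation {n : ℕ} {α : ℝ} (K : CZKernel n α) : Type where
  Kt : Pt n → Pt n → ℝ
  d : ℝ
  r : ℝ
  dpos : 0 < d
  dlt : d < r
  bounded : ∃ M, ∀ x y, |Kt x y| ≤ M
  diag : ∀ x, Kt x x = 0
  agrees : ∀ x y : Pt n, d ≤ ‖x - y‖ → ‖x - y‖ ≤ r → Kt x y = K.K x y
  compactsupp : ∃ S, ∀ x y : Pt n, S ≤ ‖x - y‖ → Kt x y = 0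

/-- The truncated operator `T^α_μ f (x) = ∫ K_t(x,y) f(y) dμ(y)`. -/
def Truncation.op {n : ℕ} {α : ℝ} {K : CZKernel n α} (τ : Truncation K)
    (μ : Measure (Pt n)) (f : Pt n → ℝ) (x : Pt n) : ℝ := ∫ y, τ.Kt x y * f y ∂μ

/-- The truncated dual operator `(T^α)^*_μ g (x) = ∫ K_t(y,x) g(y) dμ(y)`. -/
def Truncation.opAdj {n : ℕ} {α : ℝ} {K : CZKernel n α} (τ : Truncation K)
    (μ : Measure (Pt n)) (g : Pt n → ℝ) (x : Pt n) : ℝ := ∫ y, τ.Kt y x * g y ∂μ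

/-- The two-weight norm constant `𝔑_{T^α}(σ,ω)`, uniform over all truncations. -/
def normConst {n : ℕ} {α : ℝ} (K : CZKernel n α) (σ ω : Measure (Pt n)) : ℝ≥0∞ :=
  sInf {N : ℝ≥0∞ | ∀ τ : Truncation K, ∀ f : Pt n → ℝ,
    ∫⁻ x, ENNReal.ofReal ((τ.op σ f x) ^ 2) ∂ω ≤ N ^ 2 * ∫⁻ x, ENNReal.ofReal ((f x) ^ 2) ∂σ}

/-- The (quasi)cube `Ω Q` associated to a cube `Q` and a globally biLipschitz map `Ω`;
for ordinary cubes take `Ω = id`. -/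
def qset {n : ℕ} (Om : Pt n → Pt n) (Q : Cube n) : Set (Pt n) := Om '' Q.set

/-- The (quasi)cube testing constant `𝔗_{T^α}(σ,ω)`, uniform over all truncations. -/
def testConst {n : ℕ} {α : ℝ} (Om : Pt n → Pt n) (K : CZKernel n α)
    (σ ω : Measure (Pt n)) : ℝ≥0∞ :=
  sInf {T : ℝ≥0∞ | ∀ τ : Truncation K, ∀ Q : Cube n,
    ∫⁻ x in qset Om Q, ENNReal.ofReal ((τ.op σ (indic (qset Om Q)) x) ^ 2) ∂ω ≤
      T ^ 2 * σ (qset Om Q)}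

/-- The dual (quasi)cube testing constant `𝔗^*_{T^α}(σ,ω)`. -/
def testConstDual {n : ℕ} {α : ℝ} (Om : Pt n → Pt n) (K : CZKernel n α)
    (σ ω : Measure (Pt n)) : ℝ≥0∞ :=
  sInf {T : ℝ≥0∞ | ∀ τ : Truncation K, ∀ Q : Cube n,
    ∫⁻ x in qset Om Q, ENNReal.ofReal ((τ.opAdj ω (indic (qset Om Q)) x) ^ 2) ∂σ ≤
      T ^ 2 * ω (qset Om Q)}

/-- The weak boundedness constant `𝒲ℬ𝒫_{T^α}(σ,ω)` with comparability constant `Cc`. -/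
def wbpConst {n : ℕ} {α : ℝ} (K : CZKernel n α) (Cc : ℝ) (σ ω : Measure (Pt n)) : ℝ≥0∞ :=
  sInf {W : ℝ≥0∞ | ∀ τ : Truncation K, ∀ Q Q' : Cube n, sideComp Cc Q Q' →
    (Q.set ⊆ Q'.tri.set \ Q'.set ∨ Q'.set ⊆ Q.tri.set \ Q.set) →
    ENNReal.ofReal |∫ x in Q.set, τ.op σ (indic Q'.set) x ∂ω| ≤
      W * (ω Q.set) ^ (1/2 : ℝ) * (σ Q'.set) ^ (1/2 : ℝ)}

/-- The indicator/touching constant `𝔍_{T^α}(σ,ω)` with comparability constant `Cc`. -/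
def indTouchConst {n : ℕ} {α : ℝ} (K : CZKernel n α) (Cc : ℝ) (σ ω : Measure (Pt n)) : ℝ≥0∞ :=
  sInf {Jc : ℝ≥0∞ | ∀ τ : Truncation K, ∀ Q Q' : Cube n, Touching Q Q' → sideComp Cc Q Q' →
    (Q.set ⊆ Q'.tri.set \ Q'.set ∨ Q'.set ⊆ Q.tri.set \ Q.set) →
    ENNReal.ofReal |∫ x in Q'.set, τ.op σ (indic Q.set) x ∂ω| ≤
      Jc * (σ Q.set) ^ (1/2 : ℝ) * (ω Q'.set) ^ (1/2 : ℝ)}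

/-- The reproducing Poisson integral `𝒫^α(ΩQ, μ)`. -/
def repPoisson {n : ℕ} (α : ℝ) (Om : Pt n → Pt n) (Q : Cube n) (μ : Measure (Pt n)) : ℝ≥0∞ :=
  ∫⁻ x, ENNReal.ofReal ((Q.l / (Q.l + ‖x - Om Q.center‖) ^ 2) ^ ((n : ℝ) - α)) ∂μ

/-- The standard Poisson integral `P^α(ΩQ, μ)`. -/
def stdPoisson {n : ℕ} (α : ℝ) (Om : Pt n → Pt n) (Q : Cube n) (μ : Measure (Pt n)) : ℝ≥0∞ :=
  ∫⁻ x, ENNReal.ofReal (Q.l / (Q.l + ‖x - Om Q.center‖) ^ ((n : ℝ) + 1 - α)) ∂μ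

/-- The one-tailed Muckenhoupt constant `𝒜₂^α(σ,ω)`. -/
def a2tail {n : ℕ} (α : ℝ) (Om : Pt n → Pt n) (σ ω : Measure (Pt n)) : ℝ≥0∞ :=
  ⨆ Q : Cube n, repPoisson α Om Q (σ.restrict (qset Om Q)ᶜ) * ω (qset Om Q) /
    ENNReal.ofReal (Q.l ^ ((n : ℝ) - α))

/-- The set of common point masses of `σ` and `ω`. -/
def commonAtoms {n : ℕ} (σ ω : Measure (Pt n)) : Set (Pt n) := {p | 0 < σ {p} ∧ 0 < ω {p}}

/-- The punctured mass `ω(Q, 𝔓_{(σ,ω)})`. -/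
def punctMass {n : ℕ} (σ ω : Measure (Pt n)) (Om : Pt n → Pt n) (Q : Cube n) : ℝ≥0∞ :=
  ω (qset Om Q) - ⨆ p ∈ qset Om Q ∩ commonAtoms σ ω, ω {p}

/-- The punctured Muckenhoupt constant `A₂^{α,punct}(σ,ω)`. -/
def a2punct {n : ℕ} (α : ℝ) (Om : Pt n → Pt n) (σ ω : Measure (Pt n)) : ℝ≥0∞ :=
  ⨆ Q : Cube n, (punctMass σ ω Om Q / ENNReal.ofReal (Q.l ^ ((n : ℝ) - α))) *
    (σ (qset Om Q) / ENNReal.ofReal (Q.l ^ ((n : ℝ) - α)))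

/-- The full Muckenhoupt constant `𝔄₂^α = 𝒜₂^α + 𝒜₂^{α,*} + A₂^{α,punct} + A₂^{α,*,punct}`. -/
def muckA2 {n : ℕ} (α : ℝ) (Om : Pt n → Pt n) (σ ω : Measure (Pt n)) : ℝ≥0∞ :=
  a2tail α Om σ ω + a2tail α Om ω σ + a2punct α Om σ ω + a2punct α Om ω σ

/-- The dyadic cube of the grid translated by `t`, of scale `k` and position `m`. -/
def dCube {n : ℕ} (t : Pt n) (k : ℤ) (m : Fin n → ℤ) : Cube n :=
  ⟨WithLp.toLp 2 (fun i => t i + (2:ℝ) ^ k * m i), (2:ℝ) ^ k, by positivity⟩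

/-- The dyadic grid with origin `t`. -/
def gridCubes {n : ℕ} (t : Pt n) : Set (Cube n) := {Q | ∃ k m, Q = dCube t k m}

/-- Alternate dyadic cubes: unions of `2ⁿ` grid cubes of half the side length. -/
def altCubes {n : ℕ} (t : Pt n) : Set (Cube n) :=
  {Q | ∃ (k : ℤ) (m : Fin n → ℤ), Q.l = (2:ℝ) ^ k ∧ ∀ i, Q.c i = t i + (2:ℝ) ^ (k - 1) * m i}

/-- The `μ`-average of `f` over `s`. -/
def cubeAvg {n : ℕ} (μ : Measure (Pt n)) (s : Set (Pt n)) (f : Pt n → ℝ) : ℝ :=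
  (∫ x in s, f x ∂μ) / (μ s).toReal

/-- The martingale (Haar) difference `Δ_Q^μ f`. -/
def haarDiff {n : ℕ} (μ : Measure (Pt n)) (Q : Cube n) (f : Pt n → ℝ) (x : Pt n) : ℝ :=
  ∑ e : Fin n → Bool,
    Set.indicator (Q.child e).set (fun _ => cubeAvg μ (Q.child e).set f - cubeAvg μ Q.set f) x

/-- `J` is `(r,ε)`-deeply embedded in `K`. -/
def deepEmb {n : ℕ} (r : ℕ) (ε : ℝ) (J K : Cube n) : Prop :=
  J.set ⊆ K.set ∧ (2:ℝ) ^ r * J.l ≤ K.l ∧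
    ENNReal.ofReal (J.l ^ ε * K.l ^ (1 - ε) / 2) ≤ sDistE J.set (frontier K.set)

/-- The maximal `(r,ε)`-deeply embedded dyadic subcubes of `K` from the grid `t`. -/
def maxDeep {n : ℕ} (r : ℕ) (ε : ℝ) (t : Pt n) (K : Cube n) : Set (Cube n) :=
  {J | J ∈ gridCubes t ∧ deepEmb r ε J K ∧
    ∀ J' ∈ gridCubes t, J.set ⊆ J'.set → deepEmb r ε J' K → J' = J}

/-- The grid children of a (possibly alternate) cube `K`. -/
def gridChildren {n : ℕ} (t : Pt n) (K : Cube n) : Set (Cube n) :=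
  {K' | K' ∈ gridCubes t ∧ K'.l = K.l / 2 ∧ K'.set ⊆ K.set}

/-- `P = π^ℓ K'` is the `ℓ`-fold grid ancestor of `K'`. -/
def gridAncestor {n : ℕ} (t : Pt n) (lev : ℕ) (K' P : Cube n) : Prop :=
  P ∈ gridCubes t ∧ P.l = (2:ℝ) ^ lev * K'.l ∧ K'.set ⊆ P.set

/-- The refinement `M^ℓ_{(r,ε)-deep,𝒟}(K)` of the maximal deeply embedded collection. -/
def maxDeepRef {n : ℕ} (r : ℕ) (ε : ℝ) (t : Pt n) (lev : ℕ) (K : Cube n) : Set (Cube n) :=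
  {J | (∃ K' ∈ gridChildren t K, ∃ P : Cube n, gridAncestor t lev K' P ∧ J ∈ maxDeep r ε t P) ∧
       ∃ L ∈ maxDeep r ε t K, J.set ⊆ L.set}

/-- The `ω`-average (barycenter) of the identity over the quasicube `Ω J`. -/
def cubeAvgVec {n : ℕ} (Om : Pt n → Pt n) (ω : Measure (Pt n)) (J : Cube n) : Pt n :=
  ((ω (qset Om J)).toReal)⁻¹ • ∫ x in qset Om J, x ∂ω

/-- The energy `‖P^ω_{ΩJ} x‖²_{L²(ω)} = ∫_{ΩJ} |x - E_{ΩJ}^ω x|² dω`. -/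
def energyTerm {n : ℕ} (Om : Pt n → Pt n) (ω : Measure (Pt n)) (J : Cube n) : ℝ≥0∞ :=
  ∫⁻ x in qset Om J, ENNReal.ofReal (‖x - cubeAvgVec Om ω J‖ ^ 2) ∂ω

/-- The energy sum `Σ_{J ∈ 𝒥} (P^α(J, 1_I σ)/ℓ(J))² ‖P_J^ω x‖²`. -/
def energySum {n : ℕ} (α : ℝ) (Om : Pt n → Pt n) (σ ω : Measure (Pt n)) (I : Cube n)
    (𝒥 : Set (Cube n)) : ℝ≥0∞ :=
  ∑' J : 𝒥, (stdPoisson α Om (J : Cube n) (σ.restrict (qset Om I)) /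
      ENNReal.ofReal ((J : Cube n).l)) ^ 2 * energyTerm Om ω (J : Cube n)

/-- `Ir` is a partition of `I` into dyadic subcubes from the grid `t`. -/
def isGridPartition {n : ℕ} (t : Pt n) (I : Cube n) (Ir : ℕ → Cube n) : Prop :=
  (∀ k, Ir k ∈ gridCubes t) ∧ (∀ k, (Ir k).set ⊆ I.set) ∧
  (∀ k k', k ≠ k' → Disjoint (Ir k).set (Ir k').set) ∧ (⋃ k, (Ir k).set) = I.set

/-- The strong energy constant `ℰ_α^{strong}(σ,ω)` with goodness parameters `r, ε`. -/
def strongEnergy {n : ℕ} (r : ℕ) (ε α : ℝ) (Om : Pt n → Pt n) (σ ω : Measure (Pt n)) : ℝ≥0∞ :=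
  sInf {E : ℝ≥0∞ |
    (∀ (t : Pt n) (I : Cube n), I ∈ gridCubes t → ∀ Ir : ℕ → Cube n, isGridPartition t I Ir →
      (∑' k : ℕ, energySum α Om σ ω I (maxDeep r ε t (Ir k))) ≤ E ^ 2 * σ (qset Om I)) ∧
    (∀ (t : Pt n) (I : Cube n), I ∈ altCubes t → ∀ lev : ℕ,
      energySum α Om σ ω I (maxDeepRef r ε t lev I) ≤ E ^ 2 * σ (qset Om I))}

/-- The translation `γ` of step `2^{-M}` indexed by `idx`. -/
def gamOf {n : ℕ} (M : ℕ) {Kc : ℕ} (idx : Fin n → Fin Kc) : Pt n :=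
  WithLp.toLp 2 (fun i => (idx i : ℝ) * (2:ℝ) ^ (-(M : ℤ)))

/-- The truncated dyadic grid built on `𝔻_M`, of size `2^{-N}`, translated by `γ`. -/
def truncGrid {n : ℕ} (M : ℕ) (N : ℤ) (γ : Pt n) : Set (Cube n) :=
  {Q | ∃ (k : ℤ) (m : Fin n → ℤ), -(M : ℤ) ≤ k ∧ k ≤ -N ∧ Q = dCube γ k m}

/-- The siblings of `Q`: the `3ⁿ` triadic children of `3Q`. -/
def siblings {n : ℕ} (Q : Cube n) : Set (Cube n) :=
  {Q' | ∃ a : Fin n → Fin 3, Q'.l = Q.l ∧ ∀ i, Q'.c i = Q.c i + ((a i : ℝ) - 1) * Q.l}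

/-- A grid `𝒟` is `Q`-good for the goodness parameters `r, ε`. -/
def QGoodGrid {n : ℕ} (r : ℕ) (ε : ℝ) (Q : Cube n) (𝒟 : Set (Cube n)) : Prop :=
  ∀ Q' ∈ siblings Q, ∀ I ∈ 𝒟, (2:ℝ) ^ r * Q.l ≤ I.l →
    ENNReal.ofReal (Q'.l ^ ε * I.l ^ (1 - ε) / 2) ≤ sDistE Q'.set (frontier I.set)

/-- A cube `I` is `r`-good in the grid `𝒟`. -/
def rGoodIn {n : ℕ} (r : ℕ) (ε : ℝ) (I : Cube n) (𝒟 : Set (Cube n)) : Prop :=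
  ∀ K ∈ 𝒟, (2:ℝ) ^ r * I.l ≤ K.l →
    ENNReal.ofReal (I.l ^ ε * K.l ^ (1 - ε) / 2) ≤ sDistE I.set (frontier K.set)

/-- The good projection `P^μ_{Q;good} f` relative to the grid `𝒟`. -/
def projGood {n : ℕ} (r : ℕ) (ε : ℝ) (Q : Cube n) (𝒟 : Set (Cube n)) (μ : Measure (Pt n))
    (f : Pt n → ℝ) (x : Pt n) : ℝ :=
  if QGoodGrid r ε Q 𝒟 then
    ∑' I : {I : Cube n // I ∈ 𝒟 ∧ rGoodIn r ε I 𝒟}, haarDiff μ (I : Cube n) f x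
  else 0

/-- The bad projection `P^μ_{Q;bad} f = f - P^μ_{Q;good} f`. -/
def projBad {n : ℕ} (r : ℕ) (ε : ℝ) (Q : Cube n) (𝒟 : Set (Cube n)) (μ : Measure (Pt n))
    (f : Pt n → ℝ) (x : Pt n) : ℝ := f x - projGood r ε Q 𝒟 μ f x

/-- An 'appropriate' function: supported in a cube `L` with mean zero, with `−N > ℓ(L) + r`,
and constant on the tiles of `𝔻_M`. -/
def Appropriate {n : ℕ} (μ : Measure (Pt n)) (M : ℕ) (N : ℤ) (r : ℕ) (f : Pt n → ℝ) : Prop :=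
  ∃ L : Cube n, (∀ x, x ∉ L.set → f x = 0) ∧ (∫ x in L.set, f x ∂μ) = 0 ∧
    L.l + (r : ℝ) < (-N : ℝ) ∧
    ∀ m : Fin n → ℤ, ∀ x ∈ (dCube 0 (-(M : ℤ)) m).set, ∀ y ∈ (dCube 0 (-(M : ℤ)) m).set, f x = f y

/-- Pairs `(I,J)` of grid cubes with `J ⊂ 3I` and `ρ`-comparable side lengths. -/
def pairsNear {n : ℕ} (t : Pt n) (ρ : ℕ) : Set (Cube n × Cube n) :=
  {p | p.1 ∈ gridCubes t ∧ p.2 ∈ gridCubes t ∧ p.2.set ⊆ p.1.tri.set ∧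
       (2:ℝ) ^ (-(ρ:ℤ)) * p.1.l ≤ p.2.l ∧ p.2.l ≤ (2:ℝ) ^ (ρ:ℤ) * p.1.l}

/-- Pairs `(I,J)` of grid cubes with `I ⊂ 3J` and `ρ`-comparable side lengths. -/
def pairsNear' {n : ℕ} (t : Pt n) (ρ : ℕ) : Set (Cube n × Cube n) :=
  {p | p.1 ∈ gridCubes t ∧ p.2 ∈ gridCubes t ∧ p.1.set ⊆ p.2.tri.set ∧
       (2:ℝ) ^ (-(ρ:ℤ)) * p.1.l ≤ p.2.l ∧ p.2.l ≤ (2:ℝ) ^ (ρ:ℤ) * p.1.l}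

/-- The inner product `⟨T^α_σ Δ_I^σ f, Δ_J^ω g⟩_ω`. -/
def innerTT {n : ℕ} {α : ℝ} {K : CZKernel n α} (τ : Truncation K) (σ ω : Measure (Pt n))
    (I J : Cube n) (f g : Pt n → ℝ) : ℝ :=
  ∫ x, τ.op σ (haarDiff σ I f) x * haarDiff ω J g x ∂ω

/-- The form `A₁(f,g)`, summing over comparable nearby pairs with `J ⊂ 3I`. -/
def formA1 {n : ℕ} {α : ℝ} {K : CZKernel n α} (τ : Truncation K) (σ ω : Measure (Pt n))
    (t : Pt n) (ρ : ℕ) (f g : Pt n → ℝ) : ℝ :=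
  ∑' p : pairsNear t ρ, innerTT τ σ ω p.1.1 p.1.2 f g

/-- The form `A₂(f,g)`, summing over comparable nearby pairs with `I ⊂ 3J`. -/
def formA2 {n : ℕ} {α : ℝ} {K : CZKernel n α} (τ : Truncation K) (σ ω : Measure (Pt n))
    (t : Pt n) (ρ : ℕ) (f g : Pt n → ℝ) : ℝ :=
  ∑' p : pairsNear' t ρ, innerTT τ σ ω p.1.1 p.1.2 f g

/-- `I` and `J` are `r`-close in the grid `t`: comparable side lengths, touching,
and one contained in the triple of the other. -/
def rClosePairs {n : ℕ} (t : Pt n) (r : ℕ) : Set (Cube n × Cube n) :=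
  {p | p.1 ∈ gridCubes t ∧ p.2 ∈ gridCubes t ∧
       (2:ℝ) ^ (-(r:ℤ)) * p.1.l ≤ p.2.l ∧ p.2.l ≤ (2:ℝ) ^ (r:ℤ) * p.1.l ∧
       Touching p.1 p.2 ∧ (p.1.set ⊆ p.2.tri.set ∨ p.2.set ⊆ p.1.tri.set)}

/-- The bilinear form `ℬ(f,g) = ⟨T_σ^α f, g⟩_ω`. -/
def formB {n : ℕ} {α : ℝ} {K : CZKernel n α} (τ : Truncation K) (σ ω : Measure (Pt n))
    (f g : Pt n → ℝ) : ℝ := ∫ x, τ.op σ f x * g x ∂ω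

/-- The bilinear form `𝒞_𝒟(f,g)`, summing over `r`-close pairs in the grid. -/
def formC {n : ℕ} {α : ℝ} {K : CZKernel n α} (τ : Truncation K) (σ ω : Measure (Pt n))
    (t : Pt n) (r : ℕ) (f g : Pt n → ℝ) : ℝ :=
  ∑' p : rClosePairs t r, innerTT τ σ ω p.1.1 p.1.2 f g

/-- The subbilinear form `𝒮_𝒟(f,g)`, summing absolute values over `r`-close pairs. -/
def formS {n : ℕ} {α : ℝ} {K : CZKernel n α} (τ : Truncation K) (σ ω : Measure (Pt n))
    (t : Pt n) (r : ℕ) (f g : Pt n → ℝ) : ℝ≥0∞ :=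
  ∑' p : rClosePairs t r, ENNReal.ofReal |innerTT τ σ ω p.1.1 p.1.2 f g|

/-- Two cubes are `ρ`-close: `ρ`-comparable side lengths, in a common grid, touching, and
one contained in the triple of the other. -/
def rhoClose {n : ℕ} (ρ : ℕ) (Q R : Cube n) : Prop :=
  (2:ℝ) ^ (-(ρ:ℤ)) * Q.l ≤ R.l ∧ R.l ≤ (2:ℝ) ^ (ρ:ℤ) * Q.l ∧
  (∃ t : Pt n, Q ∈ gridCubes t ∧ R ∈ gridCubes t) ∧
  Touching Q R ∧ (Q.set ⊆ R.tri.set ∨ R.set ⊆ Q.tri.set)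

/-! Only cubes `A_k` that are translates of one another along a coordinate direction, and the slabs
`S_k` of width `λ ℓ(J)` at one of their faces, matter: the estimate reduces to bounding
`Σ_k ω(S_k) (E_{A_k}^ω 1_R)²`. Split the translations into `O(λ ℓ(J) / 2^{-M})` residue classes,
which makes the slabs of a class disjoint, and each class into boundedly many windows shorter than
half the side length, which makes `A_k` contain every slab swept before `S_k`. Within one window,
the averages are at most `1` on `S_k ∩ R`, and these sets are disjoint, so they contribute at most
`r = ω(R)`. Outside `R`, with `G_k` the mass already swept there, the average over `A_k` is at most
`r / (r + G_k)`, and the sum is dominated by `∫₀^∞ r² / (r + G)² dG = r`. Dividing the number of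
classes by the number of translations in one direction gives a bound linear in `λ`, which is
stronger than `√λ`. -/

theorem mul_div_add_sq_add_le {r b G V : ℝ} (hr : 0 < r) (hb : 0 ≤ b) (hG : 0 ≤ G)
    (hV : b + G ≤ V) :
    b * (r / (r + V)) ^ 2 + r ^ 2 / (r + (b + G)) ≤ r ^ 2 / (r + G) := by
  rw [← le_sub_iff_add_le]
  calc b * (r / (r + V)) ^ 2
      = b * (r ^ 2 / ((r + V) * (r + V))) := by rw [div_pow, sq (r + V)]
    _ ≤ b * (r ^ 2 / ((r + G) * (r + (b + G)))) := by gcongr <;> linarith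
    _ = r ^ 2 / (r + G) - r ^ 2 / (r + (b + G)) := by field_simp; ring

theorem sum_mul_div_add_sq_le {ι β : Type*} [LinearOrder β] (s : Finset ι) (f : ι → β)
    {a V : ι → ℝ} {r : ℝ} (hr : 0 < r) (ha : ∀ k, 0 ≤ a k)
    (hV : ∀ k ∈ s, ∑ j ∈ s with f j ≤ f k, a j ≤ V k) :
    ∑ k ∈ s, a k * (r / (r + V k)) ^ 2 ≤ r := by
  have hsum : ∀ t : Finset ι, 0 ≤ ∑ k ∈ t, a k := fun t => Finset.sum_nonneg fun k _ => ha k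
  -- The extra term makes the induction telescope, as in `∫₀^∞ r² / (r + G)² dG = r`.
  suffices ∑ k ∈ s, a k * (r / (r + V k)) ^ 2 + r ^ 2 / (r + ∑ k ∈ s, a k) ≤ r from
    (le_add_of_nonneg_right (div_nonneg (sq_nonneg r) (add_nonneg hr.le (hsum s)))).trans this
  induction s using Finset.induction_on_max_value f with
  | empty => simp [sq, hr.ne']
  | insert x t hxt hmax ih =>
    have hVt : ∀ k ∈ t, ∑ j ∈ t with f j ≤ f k, a j ≤ V k := fun k hk =>
      (Finset.sum_le_sum_of_subset_of_nonneg
        (Finset.filter_subset_filter _ (Finset.subset_insert x t)) fun j _ _ => ha j).trans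
        (hV k (Finset.mem_insert_of_mem hk))
    have hVx : a x + ∑ k ∈ t, a k ≤ V x := by
      have hall : ∀ j ∈ insert x t, f j ≤ f x := by simpa using hmax
      have := hV x (Finset.mem_insert_self x t)
      rwa [Finset.filter_true_of_mem hall, Finset.sum_insert hxt] at this
    rw [Finset.sum_insert hxt, Finset.sum_insert hxt]
    linarith [ih hVt, mul_div_add_sq_add_le hr (ha x) (hsum t) hVx]

theorem add_mul_div_add_sq_le {x y p r V : ℝ} (hx : 0 ≤ x) (hy : 0 ≤ y) (hp : 0 ≤ p)
    (hpr : p ≤ r) (hV : 0 ≤ V) :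
    (x + y) * (p / (p + V)) ^ 2 ≤ x + y * (r / (r + V)) ^ 2 := by
  have hle_one : p / (p + V) ≤ 1 := div_le_one_of_le₀ (by linarith) (by positivity)
  have hmono : p / (p + V) ≤ r / (r + V) := by
    rcases hp.eq_or_lt with rfl | hp
    · rw [zero_div]
      positivity
    · rw [div_le_div_iff₀ (by positivity) (by linarith)]
      nlinarith
  rw [add_mul]
  gcongr
  exact mul_le_of_le_one_right hx (pow_le_one₀ (by positivity) hle_one)

section DisjointSets

variable {α ι : Type*} [MeasurableSpace α] (μ : Measure α) (s : Finset ι)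

theorem sum_measureReal_le_of_pairwiseDisjoint {S : ι → Set α} {B : Set α}
    (hS : ∀ k ∈ s, MeasurableSet (S k)) (hB : μ B ≠ ∞) (hSB : ∀ k ∈ s, S k ⊆ B)
    (hdisj : (s : Set ι).PairwiseDisjoint S) :
    ∑ k ∈ s, μ.real (S k) ≤ μ.real B := by
  rw [← measureReal_biUnion_finset hdisj hS fun k hk => measure_ne_top_of_subset (hSB k hk) hB]
  exact measureReal_mono (iUnion₂_subset hSB) hB

theorem sum_measureReal_mul_average_sq_le {β : Type*} [LinearOrder β] (f : ι → β)
    {A S : ι → Set α} {R : Set α} (hS : ∀ k ∈ s, MeasurableSet (S k)) (hR : MeasurableSet R)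
    (hA : ∀ k ∈ s, μ (A k) ≠ ∞) (hRfin : μ R ≠ ∞) (hdisj : (s : Set ι).PairwiseDisjoint S)
    (hnest : ∀ k ∈ s, ∀ m ∈ s, f m ≤ f k → S m ⊆ A k) :
    ∑ k ∈ s, μ.real (S k) * (μ.real (A k ∩ R) / μ.real (A k)) ^ 2 ≤ 2 * μ.real R := by
  have hAR : ∀ k, μ.real (A k ∩ R) ≤ μ.real R := fun k => measureReal_mono inter_subset_right hRfin
  rcases (measureReal_nonneg (μ := μ) (s := R)).eq_or_lt with hr | hr
  · have hzero : ∀ k, μ.real (A k ∩ R) = 0 := fun k =>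
      le_antisymm ((hAR k).trans hr.ge) measureReal_nonneg
    simp [hzero, ← hr]
  have hinside : ∑ k ∈ s, μ.real (S k ∩ R) ≤ μ.real R :=
    sum_measureReal_le_of_pairwiseDisjoint μ s (fun k hk => (hS k hk).inter hR) hRfin
      (fun _ _ => inter_subset_right) (hdisj.mono fun _ => inter_subset_left)
  have houtside : ∑ k ∈ s, μ.real (S k \ R) * (μ.real R / (μ.real R + μ.real (A k \ R))) ^ 2
      ≤ μ.real R := by
    refine sum_mul_div_add_sq_le s f hr (fun k => measureReal_nonneg) fun k hk => ?_
    refine sum_measureReal_le_of_pairwiseDisjoint μ _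
      (fun m hm => (hS m (Finset.mem_filter.1 hm).1).diff hR)
      (measure_ne_top_of_subset sdiff_subset (hA k hk)) (fun m hm => ?_)
      ((hdisj.subset (Finset.coe_subset.2 (Finset.filter_subset _ _))).mono fun _ => sdiff_subset)
    obtain ⟨hms, hmk⟩ := Finset.mem_filter.1 hm
    exact sdiff_subset_sdiff_left (hnest k hk m hms hmk)
  rw [two_mul]
  refine le_trans ?_ (add_le_add hinside houtside)
  rw [← Finset.sum_add_distrib]
  refine Finset.sum_le_sum fun k hk => ?_
  have hSfin : μ (S k) ≠ ∞ := measure_ne_top_of_subset (hnest k hk k hk le_rfl) (hA k hk)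
  rw [← measureReal_inter_add_sdiff (s := S k) hR hSfin,
    ← measureReal_inter_add_sdiff (s := A k) hR (hA k hk)]
  exact add_mul_div_add_sq_le measureReal_nonneg measureReal_nonneg measureReal_nonneg (hAR k)
    measureReal_nonneg

end DisjointSets

theorem sum_le_card_mul_of_forall_fiber_sum_le {ι κ : Type*} {s : Finset ι} {t : Finset κ}
    {g : ι → κ} {f : ι → ℝ} {B : ℝ} (hg : ∀ k ∈ s, g k ∈ t)
    (hB : ∀ u ⊆ s, (∀ k ∈ u, ∀ m ∈ u, g k = g m) → ∑ k ∈ u, f k ≤ B) :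
    ∑ k ∈ s, f k ≤ t.card * B := by
  rw [← Finset.sum_fiberwise_of_maps_to hg, ← nsmul_eq_mul]
  refine Finset.sum_le_card_nsmul t _ B fun c _ => hB _ (Finset.filter_subset _ _) ?_
  exact fun k hk m hm => (Finset.mem_filter.1 hk).2.trans (Finset.mem_filter.1 hm).2.symm

theorem lt_abs_sub_mul_of_mod_eq {h w : ℝ} (hh : 0 < h) {k m : ℕ} (hne : k ≠ m)
    (hmod : k % (⌊w / h⌋₊ + 1) = m % (⌊w / h⌋₊ + 1)) : w < |k * h - m * h| := by
  have hdvd : ((⌊w / h⌋₊ + 1 : ℕ) : ℤ) ∣ (k : ℤ) - m := Nat.modEq_iff_dvd.1 hmod.symm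
  have hle : ((⌊w / h⌋₊ + 1 : ℕ) : ℤ) ≤ |(k : ℤ) - m| :=
    Int.le_of_dvd (abs_pos.2 (sub_ne_zero.2 (Nat.cast_injective.ne hne))) ((dvd_abs _ _).2 hdvd)
  have hle' : (⌊w / h⌋₊ : ℝ) + 1 ≤ |(k : ℝ) - m| := by exact_mod_cast hle
  rw [← sub_mul, abs_mul, abs_of_pos hh, ← div_lt_iff₀ hh]
  exact (Nat.lt_floor_add_one _).trans_le hle'

theorem abs_sub_lt_of_floor_div_eq {u v δ : ℝ} (hδ : 0 < δ) (hu : 0 ≤ u) (hv : 0 ≤ v)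
    (h : ⌊u / δ⌋₊ = ⌊v / δ⌋₊) : |u - v| < δ := by
  have hu₁ := Nat.floor_le (div_nonneg hu hδ.le)
  have hu₂ := Nat.lt_floor_add_one (u / δ)
  have hv₁ := Nat.floor_le (div_nonneg hv hδ.le)
  have hv₂ := Nat.lt_floor_add_one (v / δ)
  rw [h] at hu₁ hu₂
  have : |u / δ - v / δ| < 1 := abs_sub_lt_iff.2 ⟨by linarith, by linarith⟩
  rwa [← sub_div, abs_div, abs_of_pos hδ, div_lt_one hδ] at this

theorem sum_sum_update {ι κ β : Type*} [Fintype ι] [Fintype κ] [DecidableEq ι]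
    [AddCommMonoid β] (i : ι) (F : (ι → κ) → β) :
    ∑ x : ι → κ, ∑ a, F (Function.update x i a) = Fintype.card κ • ∑ x, F x := by
  let swap : (ι → κ) × κ → (ι → κ) × κ := fun p => (Function.update p.1 i p.2, p.1 i)
  have hswap : Function.Involutive swap := fun p => by simp [swap]
  calc ∑ x : ι → κ, ∑ a, F (Function.update x i a)
      = ∑ p, F (hswap.toPerm swap p).1 := by rw [← Fintype.sum_prod_type']; rfl
    _ = ∑ p : (ι → κ) × κ, F p.1 := Equiv.sum_comp (hswap.toPerm swap) fun p => F p.1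
    _ = Fintype.card κ • ∑ x, F x := by
      simp [Fintype.sum_prod_type, Finset.smul_sum]

section SurgeryEstimate

variable {n : ℕ}

namespace Cube

theorem measurableSet_set (Q : Cube n) : MeasurableSet Q.set := by
  have hpi : Q.set =
      WithLp.ofLp ⁻¹' univ.pi fun i => Ico (Q.c i) (Q.c i + Q.l) := by
    ext x
    simp [Cube.set]
  rw [hpi]
  exact (MeasurableSet.univ_pi fun _ => measurableSet_Ico).preimage (WithLp.measurable_ofLp 2 _)

theorem measure_set_ne_top (Q : Cube n) (ω : Measure (Pt n)) [IsLocallyFiniteMeasure ω] :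
    ω Q.set ≠ ∞ := by
  have hcompact : IsCompact
      (WithLp.toLp 2 '' Icc (fun i => Q.c i) fun i => Q.c i + Q.l : Set (Pt n)) :=
    isCompact_Icc.image (PiLp.continuous_toLp 2 _)
  refine measure_ne_top_of_subset (fun x hx => ?_) hcompact.measure_lt_top.ne
  exact ⟨fun i => x i, ⟨fun i => (hx i).1, fun i => (hx i).2.le⟩, rfl⟩

theorem measurableSet_inn (Q : Cube n) (lam : ℝ) : MeasurableSet (Q.inn lam) :=
  Q.measurableSet_set.inter
    (measurableSet_lt measurable_const (Metric.continuous_infDist_pt _).measurable)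

theorem le_and_add_le_of_set_subset {Q Q' : Cube n} (h : Q.set ⊆ Q'.set) (i : Fin n) :
    Q'.c i ≤ Q.c i ∧ Q.c i + Q.l ≤ Q'.c i + Q'.l := by
  have hmem : ∀ t, 0 ≤ t → t < Q.l → (WithLp.toLp 2 fun j => Q.c j + t : Pt n) ∈ Q'.set :=
    fun t h0 ht => h fun j => ⟨le_add_of_nonneg_right h0, add_lt_add_right ht _⟩
  refine ⟨by simpa using (hmem 0 le_rfl Q.lpos i).1, ?_⟩
  by_contra! hlt
  have hfar := (hmem (max 0 (Q'.c i + Q'.l - Q.c i)) (le_max_left _ _)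
    (max_lt Q.lpos (sub_lt_iff_lt_add'.2 hlt)) i).2
  exact hfar.not_ge (sub_le_iff_le_add'.1 (le_max_right _ _))

theorem child_set_subset (Q : Cube n) (e : Fin n → Bool) : (Q.child e).set ⊆ Q.set := by
  intro x hx i
  have hi := hx i
  have hl := Q.lpos
  simp only [child] at hi
  split_ifs at hi <;> constructor <;> linarith

theorem eq_of_mem_child_set {Q : Cube n} {e e' : Fin n → Bool} {x : Pt n}
    (h : x ∈ (Q.child e).set) (h' : x ∈ (Q.child e').set) : e = e' := by
  funext i
  have hi := h i
  have hi' := h' i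
  simp only [child] at hi hi'
  cases he : e i <;> cases he' : e' i <;> simp [he, he'] at hi hi' ⊢ <;> linarith

theorem c_lt_of_inter_nonempty {Q Q' : Cube n} (h : (Q.set ∩ Q'.set).Nonempty) (i : Fin n) :
    Q.c i < Q'.c i + Q'.l :=
  let ⟨_, hx, hx'⟩ := h
  (hx i).1.trans_lt (hx' i).2

theorem trans_child (Q : Cube n) (γ : Pt n) (e : Fin n → Bool) :
    (Q.trans γ).child e = (Q.child e).trans γ := by
  simp only [trans, child, Cube.mk.injEq, and_true]
  congr 1
  funext i
  ring

theorem trans_add (Q : Cube n) (γ γ' : Pt n) : Q.trans (γ + γ') = (Q.trans γ).trans γ' := by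
  simp [trans, add_assoc]

theorem exists_coord_of_mem_frontier {Q : Cube n} {y : Pt n} (hy : y ∈ frontier Q.set) :
    ∃ i, y i ≤ Q.c i ∨ Q.c i + Q.l ≤ y i := by
  by_contra! hin
  have hcont : ∀ i, Continuous fun z : Pt n => z i := by fun_prop
  refine hy.2 (mem_interior.2 ⟨⋂ i, {z : Pt n | Q.c i < z i ∧ z i < Q.c i + Q.l},
    fun z hz i => ⟨(mem_iInter.1 hz i).1.le, (mem_iInter.1 hz i).2⟩,
    isOpen_iInter_of_finite fun i => ?_, mem_iInter.2 hin⟩)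
  exact (isOpen_lt continuous_const (hcont i)).inter (isOpen_lt (hcont i) continuous_const)

theorem exists_near_face_of_notMem_inn (hn : 0 < n) {Q : Cube n} {lam : ℝ} {x : Pt n}
    (hx : x ∈ Q.set) (hxi : x ∉ Q.inn lam) :
    ∃ i, x i ≤ Q.c i + lam * Q.l ∨ Q.c i + Q.l - lam * Q.l ≤ x i := by
  have hne : (frontier Q.set).Nonempty := by
    refine nonempty_frontier_iff.2 ⟨⟨x, hx⟩, fun huniv => ?_⟩
    have hcorner : (WithLp.toLp 2 fun i => Q.c i + Q.l : Pt n) ∈ Q.set := huniv ▸ mem_univ _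
    exact lt_irrefl _ (hcorner ⟨0, hn⟩).2
  obtain ⟨y, hy, hdist⟩ := isClosed_frontier.exists_infDist_eq_dist hne x
  obtain ⟨i, hi⟩ := exists_coord_of_mem_frontier hy
  have hxy : |x i - y i| ≤ lam * Q.l := by
    refine (PiLp.norm_apply_le (x - y) i).trans ?_
    rw [← dist_eq_norm, ← hdist]
    exact not_lt.1 fun hlt => hxi ⟨hx, hlt⟩
  rw [abs_le] at hxy
  exact ⟨i, hi.imp (fun h => by linarith) fun h => by linarith⟩

/-- The part of a cube within `w` of its upper (`b = true`) or lower (`b = false`) face in the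
`i`-th direction. -/
def faceSlab (Q : Cube n) (i : Fin n) (b : Bool) (w : ℝ) : Set (Pt n) :=
  {x ∈ Q.set | if b then Q.c i + Q.l - w ≤ x i else x i ≤ Q.c i + w}

theorem faceSlab_subset (Q : Cube n) (i : Fin n) (b : Bool) (w : ℝ) : Q.faceSlab i b w ⊆ Q.set :=
  sep_subset _ _

theorem measurableSet_faceSlab (Q : Cube n) (i : Fin n) (b : Bool) (w : ℝ) :
    MeasurableSet (Q.faceSlab i b w) := by
  have hi : Measurable fun x : Pt n => x i := by fun_prop
  refine Q.measurableSet_set.inter ?_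
  cases b
  · exact measurableSet_le hi measurable_const
  · exact measurableSet_le measurable_const hi

theorem sdiff_inn_subset_iUnion_faceSlab (hn : 0 < n) {Q J : Cube n} (hQJ : Q.set ⊆ J.set)
    (lam : ℝ) :
    Q.set \ J.inn lam ⊆ ⋃ p : Fin n × Bool, Q.faceSlab p.1 p.2 (lam * J.l) := by
  rintro x ⟨hx, hxi⟩
  obtain ⟨i, hi⟩ := exists_near_face_of_notMem_inn hn (hQJ hx) hxi
  obtain ⟨hlower, hupper⟩ := le_and_add_le_of_set_subset hQJ i
  rcases hi with hi | hi
  · exact mem_iUnion.2 ⟨(i, false), hx, show x i ≤ Q.c i + lam * J.l by linarith⟩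
  · exact mem_iUnion.2 ⟨(i, true), hx, show Q.c i + Q.l - lam * J.l ≤ x i by linarith⟩

/-- The translate of a cube by `t` in the `i`-th coordinate direction. -/
def shift (Q : Cube n) (i : Fin n) (t : ℝ) : Cube n := Q.trans (EuclideanSpace.single i t)

theorem mem_shift_set {Q : Cube n} {i : Fin n} {t : ℝ} {x : Pt n} :
    x ∈ (Q.shift i t).set ↔ (Q.c i + t ≤ x i ∧ x i < Q.c i + t + Q.l) ∧
      ∀ j ≠ i, Q.c j ≤ x j ∧ x j < Q.c j + Q.l := by
  refine ⟨fun hx => ⟨by simpa [shift, trans] using hx i,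
    fun j hj => by simpa [shift, trans, hj] using hx j⟩, fun hx j => ?_⟩
  rcases eq_or_ne j i with rfl | hj
  · simpa [shift, trans] using hx.1
  · simpa [shift, trans, hj] using hx.2 j hj

theorem mem_faceSlab_shift {Q : Cube n} {i : Fin n} {b : Bool} {t w : ℝ} {x : Pt n} :
    x ∈ (Q.shift i t).faceSlab i b w ↔ x ∈ (Q.shift i t).set ∧
      if b then Q.c i + t + Q.l - w ≤ x i else x i ≤ Q.c i + t + w := by
  simp [faceSlab, shift, trans]

theorem disjoint_faceSlab_shift (Q : Cube n) (i : Fin n) (b : Bool) {s t w : ℝ}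
    (h : w < |s - t|) :
    Disjoint ((Q.shift i s).faceSlab i b w) ((Q.shift i t).faceSlab i b w) := by
  refine disjoint_left.2 fun x hs ht => h.not_ge ?_
  simp only [mem_faceSlab_shift, mem_shift_set] at hs ht
  rw [abs_le]
  cases b <;> simp only [if_true, Bool.false_eq_true, if_false] at hs ht <;>
    constructor <;> linarith

theorem faceSlab_shift_subset (Q : Cube n) (i : Fin n) (b : Bool) {s t w : ℝ}
    (hst : if b then s ≤ t else t ≤ s) (h : w + |s - t| < Q.l) :
    (Q.shift i s).faceSlab i b w ⊆ (Q.shift i t).set := by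
  intro x hx
  rw [mem_faceSlab_shift, mem_shift_set] at hx
  have hlt := abs_lt.1 (lt_sub_iff_add_lt'.2 h)
  refine mem_shift_set.2 ⟨?_, hx.1.2⟩
  cases b <;> simp only [if_true, Bool.false_eq_true, if_false] at hx hst <;>
    constructor <;> linarith

end Cube

theorem gamOf_update (M : ℕ) {K : ℕ} (idx : Fin n → Fin K) (i : Fin n) (k : Fin K) :
    gamOf M (Function.update idx i k) =
      WithLp.toLp 2 (Function.update (fun j => (idx j : ℝ) * 2 ^ (-(M : ℤ))) i 0) +
        EuclideanSpace.single i ((k : ℝ) * 2 ^ (-(M : ℤ))) := by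
  ext j
  rcases eq_or_ne j i with rfl | hj <;> simp [gamOf, *]

theorem cubeAvg_indic (ω : Measure (Pt n)) (s : Set (Pt n)) {t : Set (Pt n)}
    (ht : MeasurableSet t) : cubeAvg ω s (indic t) = ω.real (s ∩ t) / ω.real s := by
  rw [cubeAvg, indic, integral_indicator_one ht, measureReal_restrict_apply ht, inter_comm]
  rfl

theorem haarDiff_of_mem_child (ω : Measure (Pt n)) {Q : Cube n} {e : Fin n → Bool}
    (f : Pt n → ℝ) {x : Pt n} (hx : x ∈ (Q.child e).set) :
    haarDiff ω Q f x = cubeAvg ω (Q.child e).set f - cubeAvg ω Q.set f := by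
  rw [haarDiff, Finset.sum_eq_single_of_mem e (Finset.mem_univ e), indicator_of_mem hx]
  exact fun e' _ hne => indicator_of_notMem (fun h => hne (Cube.eq_of_mem_child_set h hx)) _

/-- The mass of a face slab of `Q` weighted by `(E_Q^ω 1_R)²`: the contribution of one face of `Q`
to the surgery estimate. -/
def faceEnergy (ω : Measure (Pt n)) (R Q : Cube n) (i : Fin n) (b : Bool) (w : ℝ) : ℝ :=
  ω.real (Q.faceSlab i b w) * cubeAvg ω Q.set (indic R.set) ^ 2

variable (ω : Measure (Pt n))

theorem faceEnergy_nonneg (R Q : Cube n) (i : Fin n) (b : Bool) (w : ℝ) :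
    0 ≤ faceEnergy ω R Q i b w := by
  unfold faceEnergy
  positivity

/-- The sum of the energies of all `2n` faces of `Q`. -/
def boundaryEnergy (ω : Measure (Pt n)) (R Q : Cube n) (w : ℝ) : ℝ :=
  ∑ p : Fin n × Bool, faceEnergy ω R Q p.1 p.2 w

theorem boundaryEnergy_nonneg (R Q : Cube n) (w : ℝ) : 0 ≤ boundaryEnergy ω R Q w :=
  Finset.sum_nonneg fun _ _ => faceEnergy_nonneg ..

theorem inter_nonempty_of_faceEnergy_ne_zero {R Q : Cube n} {i : Fin n} {b : Bool} {w : ℝ}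
    (h : faceEnergy ω R Q i b w ≠ 0) : (Q.set ∩ R.set).Nonempty := by
  contrapose! h
  simp [faceEnergy, cubeAvg_indic ω _ R.measurableSet_set, h]

variable [IsLocallyFiniteMeasure ω]

theorem measureReal_mul_sq_cubeAvg_le_boundaryEnergy (R : Cube n) {Q : Cube n} {A : Set (Pt n)}
    {w : ℝ} (hA : A ⊆ ⋃ p : Fin n × Bool, Q.faceSlab p.1 p.2 w) :
    ω.real A * cubeAvg ω Q.set (indic R.set) ^ 2 ≤ boundaryEnergy ω R Q w := by
  simp only [boundaryEnergy, faceEnergy]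
  rw [← Finset.sum_mul]
  gcongr
  refine (measureReal_mono hA ?_).trans (measureReal_iUnion_fintype_le _)
  exact measure_ne_top_of_subset (iUnion_subset fun p => Q.faceSlab_subset _ _ _)
    (Q.measure_set_ne_top ω)

theorem lintegral_sq_haarDiff_le_boundaryEnergy (hn : 0 < n) (J R : Cube n) (e : Fin n → Bool)
    (lam : ℝ) :
    ∫⁻ x in (J.child e).set \ J.inn lam, ENNReal.ofReal (haarDiff ω J (indic R.set) x ^ 2) ∂ω ≤
      ENNReal.ofReal
        (boundaryEnergy ω R (J.child e) (lam * J.l) + boundaryEnergy ω R J (lam * J.l)) := by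
  set A := (J.child e).set \ J.inn lam
  set a := cubeAvg ω (J.child e).set (indic R.set) with ha
  set a' := cubeAvg ω J.set (indic R.set) with ha'
  have hAmeas : MeasurableSet A := (J.child e).measurableSet_set.diff (J.measurableSet_inn lam)
  have hAfin : ω A ≠ ∞ := measure_ne_top_of_subset sdiff_subset ((J.child e).measure_set_ne_top ω)
  have haa' : 0 ≤ a * a' := by
    rw [ha, ha', cubeAvg_indic ω _ R.measurableSet_set, cubeAvg_indic ω _ R.measurableSet_set]
    positivity
  calc ∫⁻ x in A, ENNReal.ofReal (haarDiff ω J (indic R.set) x ^ 2) ∂ω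
      = ∫⁻ _ in A, ENNReal.ofReal ((a - a') ^ 2) ∂ω :=
        setLIntegral_congr_fun hAmeas fun x hx => by rw [haarDiff_of_mem_child ω _ hx.1]
    _ = ENNReal.ofReal ((a - a') ^ 2 * ω.real A) := by
        rw [setLIntegral_const, ENNReal.ofReal_mul (sq_nonneg _), ofReal_measureReal hAfin]
    _ ≤ ENNReal.ofReal (ω.real A * a ^ 2 + ω.real A * a' ^ 2) := by
        refine ENNReal.ofReal_le_ofReal ?_
        nlinarith [mul_nonneg (measureReal_nonneg (μ := ω) (s := A)) haa']
    _ ≤ _ := by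
        gcongr <;> refine measureReal_mul_sq_cubeAvg_le_boundaryEnergy ω R ?_
        · exact Cube.sdiff_inn_subset_iUnion_faceSlab hn (J.child_set_subset e) lam
        · exact (sdiff_subset_sdiff_left (J.child_set_subset e)).trans
            (Cube.sdiff_inn_subset_iUnion_faceSlab hn Subset.rfl lam)

theorem sum_faceEnergy_shift_le_of_separated (R Q : Cube n) (i : Fin n) (b : Bool) {w : ℝ}
    {ι : Type*} {s : Finset ι} {τ : ι → ℝ}
    (hsep : ∀ k ∈ s, ∀ m ∈ s, k ≠ m → w < |τ k - τ m|)
    (hnear : ∀ k ∈ s, ∀ m ∈ s, k ≠ m → |τ k - τ m| < Q.l / 2) :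
    ∑ k ∈ s, faceEnergy ω R (Q.shift i (τ k)) i b w ≤ 2 * ω.real R.set := by
  simp only [faceEnergy, cubeAvg_indic ω _ R.measurableSet_set]
  refine sum_measureReal_mul_average_sq_le ω s (fun k => if b then τ k else -τ k)
    (fun k _ => Cube.measurableSet_faceSlab _ _ _ _) R.measurableSet_set
    (fun k _ => Cube.measure_set_ne_top _ ω) (R.measure_set_ne_top ω)
    (fun k hk m hm hkm => Q.disjoint_faceSlab_shift i b (hsep k hk m hm hkm))
    fun k hk m hm hmk => ?_
  rcases eq_or_ne m k with rfl | hne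
  · exact Cube.faceSlab_subset _ _ _ _
  · refine Q.faceSlab_shift_subset i b ?_ ?_
    · cases b <;> simpa using hmk
    · linarith [hsep m hm k hk hne, hnear m hm k hk hne]

theorem sum_faceEnergy_shift_le_of_inter_nonempty (R Q : Cube n) (i : Fin n) (b : Bool) {h w : ℝ}
    (hh : 0 < h) {s : Finset ℕ} (hmeet : ∀ k ∈ s, ((Q.shift i (k * h)).set ∩ R.set).Nonempty) :
    ∑ k ∈ s, faceEnergy ω R (Q.shift i (k * h)) i b w ≤
      ((⌊w / h⌋₊ + 1) * (⌊(R.l + Q.l) / (Q.l / 2)⌋₊ + 1) : ℕ) * (2 * ω.real R.set) := by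
  have hδ : 0 < Q.l / 2 := half_pos Q.lpos
  let u : ℕ → ℝ := fun k => Q.c i + k * h + Q.l - R.c i
  have hu : ∀ k ∈ s, 0 ≤ u k ∧ u k ≤ R.l + Q.l := fun k hk => by
    have hlower := Cube.c_lt_of_inter_nonempty (hmeet k hk) i
    have hupper := Cube.c_lt_of_inter_nonempty (inter_comm _ _ ▸ hmeet k hk) i
    simp only [Cube.shift, Cube.trans, PiLp.single_apply, if_true] at hlower hupper
    constructor <;> simp only [u] <;> linarith
  rw [← Finset.card_range (⌊w / h⌋₊ + 1),
    ← Finset.card_range (⌊(R.l + Q.l) / (Q.l / 2)⌋₊ + 1), ← Finset.card_product]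
  refine sum_le_card_mul_of_forall_fiber_sum_le
    (g := fun k => (k % (⌊w / h⌋₊ + 1), ⌊u k / (Q.l / 2)⌋₊)) (fun k hk => ?_) fun t hts ht => ?_
  · refine Finset.mk_mem_product (Finset.mem_range.2 (Nat.mod_lt _ (Nat.succ_pos _)))
      (Finset.mem_range_succ_iff.2 (Nat.floor_le_floor ?_))
    gcongr
    exact (hu k hk).2
  · refine sum_faceEnergy_shift_le_of_separated ω R Q i b (fun k hk m hm hkm => ?_)
      fun k hk m hm _ => ?_
    · exact lt_abs_sub_mul_of_mod_eq hh hkm (congrArg Prod.fst (ht k hk m hm))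
    · simpa [u] using abs_sub_lt_of_floor_div_eq hδ (hu k (hts hk)).1 (hu m (hts hm)).1
        (congrArg Prod.snd (ht k hk m hm))

theorem sum_faceEnergy_shift_le (R Q : Cube n) (i : Fin n) (b : Bool) {h w : ℝ} (hh : 0 < h)
    (hw : h ≤ w) (s : Finset ℕ) :
    ∑ k ∈ s, faceEnergy ω R (Q.shift i (k * h)) i b w ≤
      4 * (w / h) * (2 * R.l / Q.l + 3) * ω.real R.set := by
  have hQl := Q.lpos
  have hRl := R.lpos
  have hwh : 1 ≤ w / h := (one_le_div hh).2 hw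
  have hoffsets : (⌊w / h⌋₊ + 1 : ℝ) ≤ 2 * (w / h) := by
    linarith [Nat.floor_le (a := w / h) (by linarith)]
  have hwindows : (⌊(R.l + Q.l) / (Q.l / 2)⌋₊ + 1 : ℝ) ≤ 2 * R.l / Q.l + 3 := by
    have hfloor := Nat.floor_le (a := (R.l + Q.l) / (Q.l / 2)) (by positivity)
    have hdiv : (R.l + Q.l) / (Q.l / 2) = 2 * R.l / Q.l + 2 := by field_simp
    linarith
  rw [← Finset.sum_filter_of_ne fun k _ => inter_nonempty_of_faceEnergy_ne_zero ω]
  refine (sum_faceEnergy_shift_le_of_inter_nonempty ω R Q i b hh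
    fun k hk => (Finset.mem_filter.1 hk).2).trans ?_
  push_cast
  calc (⌊w / h⌋₊ + 1 : ℝ) * (⌊(R.l + Q.l) / (Q.l / 2)⌋₊ + 1) * (2 * ω.real R.set)
      ≤ 2 * (w / h) * (2 * R.l / Q.l + 3) * (2 * ω.real R.set) := by gcongr
    _ = 4 * (w / h) * (2 * R.l / Q.l + 3) * ω.real R.set := by ring

theorem sum_faceEnergy_trans_gamOf_le (R Q : Cube n) (i : Fin n) (b : Bool) {w : ℝ} {M K : ℕ}
    (hK : 0 < K) (hw : (2 : ℝ) ^ (-(M : ℤ)) ≤ w) :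
    ∑ idx : Fin n → Fin K, faceEnergy ω R (Q.trans (gamOf M idx)) i b w ≤
      Fintype.card (Fin n → Fin K) *
        (4 * w * (2 * R.l / Q.l + 3) / (K * 2 ^ (-(M : ℤ))) * ω.real R.set) := by
  have hK' : (0 : ℝ) < K := Nat.cast_pos.2 hK
  have hline : ∀ idx : Fin n → Fin K,
      ∑ k, faceEnergy ω R (Q.trans (gamOf M (Function.update idx i k))) i b w ≤
        4 * (w / 2 ^ (-(M : ℤ))) * (2 * R.l / Q.l + 3) * ω.real R.set := fun idx => by
    simp only [gamOf_update, Cube.trans_add]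
    set Q' := Q.trans (WithLp.toLp 2 (Function.update (fun j => (idx j : ℝ) * 2 ^ (-(M : ℤ))) i 0))
    rw [Fin.sum_univ_eq_sum_range
      fun k => faceEnergy ω R (Q'.trans (EuclideanSpace.single i (k * 2 ^ (-(M : ℤ))))) i b w]
    exact sum_faceEnergy_shift_le ω R Q' i b (by positivity) hw _
  have hsum := Finset.sum_le_sum fun idx (_ : idx ∈ Finset.univ) => hline idx
  rw [sum_sum_update i fun idx => faceEnergy ω R (Q.trans (gamOf M idx)) i b w, Finset.sum_const,
    Finset.card_univ, Fintype.card_fin, nsmul_eq_mul, nsmul_eq_mul] at hsum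
  refine le_of_mul_le_mul_left (hsum.trans_eq ?_) hK'
  field_simp

theorem sum_boundaryEnergy_trans_gamOf_le (R Q : Cube n) {w : ℝ} {M K : ℕ}
    (hK : 0 < K) (hw : (2 : ℝ) ^ (-(M : ℤ)) ≤ w) :
    ∑ idx : Fin n → Fin K, boundaryEnergy ω R (Q.trans (gamOf M idx)) w ≤
      Fintype.card (Fin n → Fin K) *
        (8 * n * w * (2 * R.l / Q.l + 3) / (K * 2 ^ (-(M : ℤ))) * ω.real R.set) := by
  unfold boundaryEnergy
  rw [Finset.sum_comm]
  refine (Finset.sum_le_card_nsmul _ _ _ fun p _ =>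
    sum_faceEnergy_trans_gamOf_le ω R Q p.1 p.2 hK hw).trans_eq ?_
  simp only [Finset.card_univ, Fintype.card_prod, Fintype.card_fin, Fintype.card_bool, nsmul_eq_mul]
  push_cast
  ring

end SurgeryEstimate

theorem Cube.l_add_l_le_of_rhoClose {n ρ M : ℕ} {N : ℤ} {J R : Cube n} (h : rhoClose ρ J R)
    (hNM : N ≤ M) (hR : R.l ≤ 2 ^ (-N)) :
    J.l + R.l ≤ (2 ^ ρ + 1) * ((2 ^ (M - N).toNat : ℕ) * 2 ^ (-(M : ℤ))) := by
  have hgrid : ((2 ^ (M - N).toNat : ℕ) : ℝ) * 2 ^ (-(M : ℤ)) = 2 ^ (-N) := by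
    rw [Nat.cast_pow, Nat.cast_ofNat, ← zpow_natCast, Int.toNat_of_nonneg (by omega),
      ← zpow_add₀ two_ne_zero]
    ring_nf
  have hJR : J.l ≤ 2 ^ ρ * R.l := by
    have hclose := h.1
    rwa [zpow_neg, zpow_natCast, inv_mul_le_iff₀ (by positivity)] at hclose
  calc J.l + R.l ≤ (2 ^ ρ + 1) * R.l := by linarith
    _ ≤ _ := by
      rw [hgrid]
      gcongr

theorem keySurgeryEstimate_general {n : ℕ} (hn : 0 < n) (ω : Measure (Pt n))
    [IsLocallyFiniteMeasure ω] (J R : Cube n) {lam : ℝ} (e : Fin n → Bool) {M K : ℕ}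
    (hstep : (2 : ℝ) ^ (-(M : ℤ)) ≤ lam * J.l) {A : ℝ}
    (hrange : J.l + R.l ≤ A * (K * 2 ^ (-(M : ℤ)))) :
    (∑ idx : Fin n → Fin K,
        ∫⁻ x in ((J.trans (gamOf M idx)).child e).set \ (J.trans (gamOf M idx)).inn lam,
          ENNReal.ofReal (haarDiff ω (J.trans (gamOf M idx)) (indic R.set) x ^ 2) ∂ω) /
        (Fintype.card (Fin n → Fin K) : ℝ≥0∞) ≤
      ENNReal.ofReal (48 * n * A * lam) * ω R.set := by
  have hJl := J.lpos
  have hRl := R.lpos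
  have hK : 0 < K := Nat.pos_of_ne_zero fun hK => by
    simp only [hK, Nat.cast_zero, zero_mul, mul_zero] at hrange
    linarith
  have hA : 0 ≤ A := nonneg_of_mul_nonneg_left ((add_pos hJl hRl).le.trans hrange) (by positivity)
  have hlam : 0 ≤ lam := nonneg_of_mul_nonneg_left (le_trans (by positivity) hstep) hJl
  have hsum : ∑ idx : Fin n → Fin K,
      (boundaryEnergy ω R ((J.child e).trans (gamOf M idx)) (lam * J.l) +
        boundaryEnergy ω R (J.trans (gamOf M idx)) (lam * J.l)) ≤
        Fintype.card (Fin n → Fin K) * (48 * n * A * lam * ω.real R.set) := by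
    rw [Finset.sum_add_distrib]
    refine (add_le_add (sum_boundaryEnergy_trans_gamOf_le ω R (J.child e) hK hstep)
      (sum_boundaryEnergy_trans_gamOf_le ω R J hK hstep)).trans ?_
    calc _ = Fintype.card (Fin n → Fin K) *
          (48 * n * ((J.l + R.l) / (K * 2 ^ (-(M : ℤ)))) * lam * ω.real R.set) := by
          simp only [Cube.child]
          field_simp
          ring
      _ ≤ _ := by
          gcongr
          exact (div_le_iff₀ (by positivity)).2 hrange
  refine ENNReal.div_le_of_le_mul ?_
  calc _ ≤ ∑ idx : Fin n → Fin K, ENNReal.ofReal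
          (boundaryEnergy ω R ((J.child e).trans (gamOf M idx)) (lam * J.l) +
            boundaryEnergy ω R (J.trans (gamOf M idx)) (lam * J.l)) := by
        refine Finset.sum_le_sum fun idx _ => ?_
        rw [← Cube.trans_child]
        exact lintegral_sq_haarDiff_le_boundaryEnergy ω hn (J.trans (gamOf M idx)) R e lam
    _ ≤ ENNReal.ofReal (Fintype.card (Fin n → Fin K) * (48 * n * A * lam * ω.real R.set)) := by
        rw [← ENNReal.ofReal_sum_of_nonneg fun idx _ =>
          add_nonneg (boundaryEnergy_nonneg ω R _ _) (boundaryEnergy_nonneg ω R _ _)]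
        exact ENNReal.ofReal_le_ofReal hsum
    _ = _ := by
        rw [ENNReal.ofReal_mul (by positivity), ENNReal.ofReal_natCast,
          ENNReal.ofReal_mul (by positivity), ofReal_measureReal (R.measure_set_ne_top ω), mul_comm]

/-- **Key surgery estimate.** Let `ω` be locally finite, `J, R` be `ρ`-close cubes, `J'` a
dyadic child of `J`, `λ ∈ (0,1/2)`. Averaging over the translation parameterization of
dyadic grids (translations of step `2^{-M}` bounded by `2^{-N}`),
`𝔼_Ω ∫_{(J+γ)' ∖ (J+γ)_λ} |Δ_{J+γ}^ω 1_R|² dω ≤ C √λ ω(R)`,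
with `C` depending only on `n` and `ρ`. -/
theorem keySurgeryEstimate (n ρ : ℕ) (hn : 0 < n) :
    ∃ C : ℝ, 0 < C ∧
      ∀ ω : Measure (Pt n), IsLocallyFiniteMeasure ω →
      ∀ J R : Cube n, rhoClose ρ J R →
      ∀ lam : ℝ, 0 < lam → lam < 1/2 →
      ∀ e : Fin n → Bool,
      ∀ (M : ℕ) (N : ℤ), N < 0 →
      (2:ℝ) ^ (-(M:ℤ)) ≤ lam * J.l → R.l ≤ (2:ℝ) ^ (-N) →
      (∑ idx : Fin n → Fin (2 ^ ((M - N).toNat)),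
            ∫⁻ x in ((J.trans (gamOf M idx)).child e).set \ (J.trans (gamOf M idx)).inn lam,
              ENNReal.ofReal ((haarDiff ω (J.trans (gamOf M idx)) (indic R.set) x) ^ 2) ∂ω) /
          (Fintype.card (Fin n → Fin (2 ^ ((M - N).toNat))) : ℝ≥0∞)
        ≤ ENNReal.ofReal (C * Real.sqrt lam) * ω R.set := by
  refine ⟨48 * n * (2 ^ ρ + 1), by positivity, fun ω _ J R hJR lam hlam hlam' e M N hN hstep hR =>
    (keySurgeryEstimate_general hn ω J R e hstep
      (Cube.l_add_l_le_of_rhoClose hJR (by omega) hR)).trans ?_⟩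
  gcongr
  exact Real.le_sqrt_of_sq_le (by nlinarith)
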